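/- Let k be an algebraically closed field of characteristic zero, k₀ ⊆ k a subfield finitely generated over ℚ, B a finitely generated k-algebra that is an integral domain, and B₀ ⊆ B a finitely generated k₀-subalgebra such that the canonical map B₀ ⊗_{k₀} k → B is an isomorphism. Let H be a Hilbert subset of Spec(B₀) and let 𝓗 ⊆ Hom_{k-alg}(B,k) be the set of all c whose restriction to B₀ has kernel belonging to H. Then there exist finitely many monic polynomials f₁,…,f_r ∈ B₀[y], each irreducible in Frac(B₀)[y], and a nonzero g ∈ B₀, such that every c ∈ Hom_{k-alg}(B,k) with c(g) ≠ 0 and with each specialized polynomial fᵢ^c irreducible in k₀(c(B₀))[y] belongs to 𝓗; here fᵢ^c is obtained by applying c to the coefficients of fᵢ, and k₀(c(B₀)) is the subfield of k generated by k₀ and the image c(B₀). -/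

import Mathlib

noncomputable section

/-- A ring map `f : R →+* S` is *algebraic* if every element of `S` satisfies a nonzero
(not necessarily monic) univariate polynomial over `R`; for an inclusion of integral domains
this is equivalent to `Frac(S)/Frac(R)` being an algebraic field extension. -/
def RingHom.IsAlgebraicOver {R S : Type*} [CommRing R] [CommRing S] (f : R →+* S) : Prop :=
  ∀ s : S, ∃ P : Polynomial R, P ≠ 0 ∧ Polynomial.eval₂ f s P = 0

/-- The residue field `κ(p)` at a prime ideal `p`, realized as the fraction field of `R ⧸ p`. -/
abbrev resField (R : Type*) [CommRing R] (p : Ideal R) : Type _ :=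
  FractionRing (R ⧸ p)

/-- The canonical map `R → κ(p)`. -/
def resCanon (R : Type*) [CommRing R] (p : Ideal R) : R →+* resField R p :=
  (algebraMap (R ⧸ p) (resField R p)).comp (Ideal.Quotient.mk p)

/-- The map on residue fields `κ(p) → κ(q)` induced by `f : R →+* S` when the prime `q` of `S`
lies over the prime `p` of `R`. -/
def resFieldMap {R S : Type*} [CommRing R] [CommRing S] (f : R →+* S)
    (p : Ideal R) (q : Ideal S) [p.IsPrime] [q.IsPrime] (h : q.comap f = p) :
    resField R p →+* resField S q :=
  IsFractionRing.lift
    (g := (algebraMap (S ⧸ q) (resField S q)).comp (Ideal.quotientMap q f h.ge))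
    ((IsFractionRing.injective (S ⧸ q) (resField S q)).comp
      (Ideal.quotientMap_injective' (H := h.ge) h.le))

/-- The residue degree `[κ(q) : κ(p)]` (as a cardinal), for `q` a prime of `S` lying over
the prime `p` of `R`; junk value `0` if `q` does not lie over `p`. -/
def resRank {R S : Type*} [CommRing R] [CommRing S] (f : R →+* S)
    (p : PrimeSpectrum R) (q : PrimeSpectrum S) : Cardinal :=
  letI := Classical.dec (q.asIdeal.comap f = p.asIdeal)
  if h : q.asIdeal.comap f = p.asIdeal then
    letI := (resFieldMap f p.asIdeal q.asIdeal h).toAlgebra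
    Module.rank (resField R p.asIdeal) (resField S q.asIdeal)
  else 0

/-- The degree `[Frac(S) : Frac(R)]` (as a cardinal) of the extension of fraction fields
induced by an injective map `f : R →+* S` of integral domains; junk value `0` if `f` is not
injective. -/
def fracRank {R S : Type*} [CommRing R] [IsDomain R] [CommRing S] [IsDomain S]
    (f : R →+* S) : Cardinal :=
  letI := Classical.dec (Function.Injective f)
  if hf : Function.Injective f then
    letI := (IsFractionRing.lift (g := (algebraMap S (FractionRing S)).comp f)
      ((IsFractionRing.injective S (FractionRing S)).comp hf) :
        FractionRing R →+* FractionRing S).toAlgebra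
    Module.rank (FractionRing R) (FractionRing S)
  else 0

/-- The basic Hilbert set `H(S/R)`: the set of primes `p` of `R` such that there is exactly
one prime `q` of `S` lying over `p`, and this `q` satisfies `[κ(q) : κ(p)] = [Frac(S) : Frac(R)]`. -/
def basicHilbertSet {R S : Type*} [CommRing R] [IsDomain R] [CommRing S] [IsDomain S]
    (f : R →+* S) : Set (PrimeSpectrum R) :=
  {p | (∃! q : PrimeSpectrum S, q.asIdeal.comap f = p.asIdeal) ∧
    ∀ q : PrimeSpectrum S, q.asIdeal.comap f = p.asIdeal → resRank f p q = fracRank f}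

/-- The data of an integral domain extension `R ⊆ S` which is of finite type and algebraic
over `R` (so that `Frac(S)/Frac(R)` is a finite extension). -/
structure AlgExt (R : Type u) [CommRing R] : Type (u + 1) where
  /-- the extension ring -/
  carrier : Type u
  [commRing : CommRing carrier]
  [isDomain : IsDomain carrier]
  /-- the inclusion map -/
  hom : R →+* carrier
  inj : Function.Injective hom
  ft : hom.FiniteType
  alg : hom.IsAlgebraicOver

attribute [instance] AlgExt.commRing AlgExt.isDomain

/-- A Hilbert subset of `Spec R`: a finite intersection of basic Hilbert sets `H(Bᵢ/R)`
with a basic Zariski open set `D(b)`, `b ≠ 0`. -/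
def IsHilbertSet {R : Type u} [CommRing R] [IsDomain R] (H : Set (PrimeSpectrum R)) : Prop :=
  ∃ (r : ℕ) (E : Fin r → AlgExt R) (b : R), b ≠ 0 ∧
    H = (⋂ i, basicHilbertSet (E i).hom) ∩ {p | b ∉ p.asIdeal}

/-- The set of primes `p` of `R` at which the reduction of the polynomial `g` modulo `p` is
irreducible in `κ(p)[y]`. -/
def irreduciblePolySet {R : Type*} [CommRing R] (g : Polynomial R) :
    Set (PrimeSpectrum R) :=
  {p | Irreducible (g.map (resCanon R p.asIdeal))}

end

/-!
Let `R ⊆ S` be an algebraic extension of domains of finite type, with separable extension of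
fraction fields. The primitive element theorem and clearing of denominators give `α : S`, a root
of a monic polynomial `f` over `R` that is irreducible over `Frac R`, with `S[1/g] = R[1/g][α]`
for some nonzero `g : R`. If `g ∉ p`, the fibre of `Spec S → Spec R` over `p` is a closed subset
of `Spec κ(p)[y]/(f mod p)`, nonempty because `α` is integral. If moreover `f mod p` is
irreducible, this is a single point, with residue field generated by a root of `f mod p`, and so
of degree `deg f = [Frac S : Frac R]` over `κ(p)`; that is, `p ∈ H(S/R)`. Finally, for a ring
homomorphism `c` from `R` to a field `L`, the residue field at `ker c` embeds in `L`, so that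
irreducibility of `f^c` over `L` descends to irreducibility of `f mod ker c`.
-/

section FieldGeneration

open Polynomial IntermediateField
open scoped nonZeroDivisors

variable {K F : Type*} [Field K] [Field F] [Algebra K F]

theorem adjoin_simple_smul_eq {c : K} (hc : c ≠ 0) (β : F) : K⟮c • β⟯ = K⟮β⟯ := by
  refine le_antisymm (adjoin_simple_le_iff.2 ?_) (adjoin_simple_le_iff.2 ?_)
  · exact smul_mem _ (mem_adjoin_simple_self K β)
  · simpa only [inv_smul_smul₀ hc] using
      smul_mem K⟮c • β⟯ (mem_adjoin_simple_self K (c • β)) (x := c⁻¹)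

theorem rank_eq_natDegree_of_adjoin_eq_top {α : F} {p : K[X]} (hp : Irreducible p)
    (hroot : aeval α p = 0) (htop : K⟮α⟯ = ⊤) : Module.rank K F = p.natDegree := by
  have hα : IsIntegral K α := IsAlgebraic.isIntegral ⟨p, hp.ne_zero, hroot⟩
  have hdeg : (minpoly K α).natDegree = p.natDegree := by
    rw [← minpoly.eq_of_irreducible hp hroot,
      natDegree_mul_C (inv_ne_zero (leadingCoeff_ne_zero.2 hp.ne_zero))]
  have : FiniteDimensional K K⟮α⟯ := adjoin.finiteDimensional hα
  rw [← rank_top', ← htop, ← Module.finrank_eq_rank, adjoin.finrank hα, hdeg]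

section FractionField

variable {R : Type*} [CommRing R] [IsDomain R] [Algebra R K] [IsFractionRing R K] [Algebra R F]
  [IsScalarTower R K F] {β : F}

theorem exists_ne_zero_natDegree_eq_minpoly_aeval_eq_zero (hβ : IsIntegral K β) :
    ∃ P : R[X], P ≠ 0 ∧ P.natDegree = (minpoly K β).natDegree ∧ aeval β P = 0 := by
  obtain ⟨b, hb, hP⟩ := IsLocalization.integerNormalization_spec R⁰ (minpoly K β)
  set P := IsLocalization.integerNormalization R⁰ (minpoly K β)
  have hb0 : algebraMap R K b ≠ 0 := by simpa using nonZeroDivisors.ne_zero hb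
  have hPK : P.map (algebraMap R K) = algebraMap R K b • minpoly K β := by
    rw [hP, algebraMap_smul]
  refine ⟨P, ?_, ?_, ?_⟩
  · intro h
    rw [h, Polynomial.map_zero, eq_comm, smul_eq_zero] at hPK
    exact hPK.elim hb0 (minpoly.ne_zero hβ)
  · rw [← natDegree_map_eq_of_injective (IsFractionRing.injective R K), hPK, natDegree_smul _ hb0]
  · rw [← aeval_map_algebraMap K, hPK, map_smul, minpoly.aeval, smul_zero]

/- `R` need not be integrally closed, so it is not enough to make `β` integral over `R`: clearing
the denominators of its minimal polynomial keeps the degree, hence the irreducibility over `K`. -/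
theorem exists_monic_irreducible_map_aeval_smul_eq_zero (hβ : IsIntegral K β) :
    ∃ (d : R) (f : R[X]), d ≠ 0 ∧ f.Monic ∧ Irreducible (f.map (algebraMap R K)) ∧
      aeval (d • β) f = 0 := by
  obtain ⟨P, hP0, hdegP, hrootP⟩ := exists_ne_zero_natDegree_eq_minpoly_aeval_eq_zero (R := R) hβ
  set d := P.leadingCoeff
  set f := P.integralNormalization
  have hf : f.Monic := monic_integralNormalization hP0
  have hd0 : d ≠ 0 := leadingCoeff_ne_zero.2 hP0
  have hroot : aeval (d • β) f = 0 := by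
    rw [Algebra.smul_def]
    refine integralNormalization_aeval_eq_zero hrootP fun x hx => ?_
    rwa [IsScalarTower.algebraMap_apply R K F, map_eq_zero,
      map_eq_zero_iff _ (IsFractionRing.injective R K)] at hx
  have hdβ : IsIntegral K (d • β) := by
    rw [← algebraMap_smul K]; exact hβ.smul _
  have hdeg : f.natDegree = (minpoly K (d • β)).natDegree := by
    rw [natDegree_integralNormalization, hdegP, ← adjoin.finrank hβ, ← adjoin.finrank hdβ,
      ← algebraMap_smul K d β, adjoin_simple_smul_eq (by simpa using hd0)]
  have hmin : minpoly K (d • β) = f.map (algebraMap R K) :=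
    (eq_of_monic_of_dvd_of_natDegree_le (minpoly.monic hdβ) (hf.map _)
      (minpoly.dvd K _ (by rw [aeval_map_algebraMap, hroot]))
      (by rw [hf.natDegree_map, hdeg])).symm
  exact ⟨d, f, hd0, hf, hmin ▸ minpoly.irreducible hdβ, hroot⟩

end FractionField

end FieldGeneration

section ResidueField

variable {R S : Type*} [CommRing R] [CommRing S]

theorem resCanon_eq_zero_iff {I : Ideal R} {r : R} : resCanon R I r = 0 ↔ r ∈ I := by
  rw [resCanon, RingHom.comp_apply, IsFractionRing.to_map_eq_zero_iff,
    Ideal.Quotient.eq_zero_iff_mem]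

theorem exists_resCanon_div_resCanon_eq {Q : Ideal S} [Q.IsPrime] (x : resField S Q) :
    ∃ a b : S, resCanon S Q a / resCanon S Q b = x := by
  obtain ⟨a, b, -, rfl⟩ := IsFractionRing.div_surjective (A := S ⧸ Q) x
  obtain ⟨a, rfl⟩ := Ideal.Quotient.mk_surjective a
  obtain ⟨b, rfl⟩ := Ideal.Quotient.mk_surjective b
  exact ⟨a, b, rfl⟩

theorem resFieldMap_resCanon (φ : R →+* S) {p : Ideal R} {Q : Ideal S} [p.IsPrime] [Q.IsPrime]
    (hQ : Q.comap φ = p) (r : R) : resFieldMap φ p Q hQ (resCanon R p r) = resCanon S Q (φ r) := by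
  simp [resFieldMap, resCanon]

/-- `κ(Q)` as a `κ(p)`-algebra, with the structure map used in `resRank`. -/
noncomputable abbrev resFieldAlgebra [Algebra R S] {p : Ideal R} {Q : Ideal S} [p.IsPrime]
    [Q.IsPrime] (hQ : Q.comap (algebraMap R S) = p) : Algebra (resField R p) (resField S Q) :=
  (resFieldMap (algebraMap R S) p Q hQ).toAlgebra

theorem isScalarTower_resFieldAlgebra [Algebra R S] {p : Ideal R} {Q : Ideal S} [p.IsPrime]
    [Q.IsPrime] (hQ : Q.comap (algebraMap R S) = p) :
    letI := resFieldAlgebra hQ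
    IsScalarTower R (resField R p) (resField S Q) :=
  letI := resFieldAlgebra hQ
  .of_algebraMap_eq fun r => (resFieldMap_resCanon (algebraMap R S) hQ r).symm

theorem fracRank_algebraMap [Algebra R S] [IsDomain R] [IsDomain S] [FaithfulSMul R S] :
    letI := FractionRing.liftAlgebra R (FractionRing S)
    fracRank (algebraMap R S) = Module.rank (FractionRing R) (FractionRing S) := by
  rw [fracRank, dif_pos (FaithfulSMul.algebraMap_injective R S)]

end ResidueField

section GeneratorAway

open Polynomial IntermediateField
open scoped nonZeroDivisors Pointwise

/-- `α` generates the `R`-algebra `S` away from `g`, that is, `S[1/g] = R[1/g][α]`. The condition is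
stated inside `S` so as to avoid localizations. -/
def IsGeneratorAway {R S : Type*} [CommRing R] [CommRing S] [Algebra R S] (g : R) (α : S) : Prop :=
  ∀ s : S, ∃ N : ℕ, g ^ N • s ∈ Algebra.adjoin R {α}

variable {R S : Type*} [CommRing R] [CommRing S] [Algebra R S] {g : R} {α : S} {f : R[X]}

theorem exists_isGeneratorAway_of_exists_smul_mem_adjoin [IsDomain R] [Algebra.FiniteType R S]
    (h : ∀ s : S, ∃ r : R, r ≠ 0 ∧ r • s ∈ Algebra.adjoin R {α}) :
    ∃ g : R, g ≠ 0 ∧ IsGeneratorAway g α := by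
  choose d hd0 hd using h
  obtain ⟨T, hT⟩ := Algebra.FiniteType.out (R := R) (A := S)
  refine ⟨∏ t ∈ T, d t, Finset.prod_ne_zero_iff.2 fun t _ => hd0 t, fun s => ?_⟩
  have hmul : (∏ t ∈ T, d t) • (T : Set S) ⊆ Algebra.adjoin R {α} := by
    rintro _ ⟨t, ht, rfl⟩
    obtain ⟨e, he⟩ := Finset.dvd_prod_of_mem d ht
    simpa only [he, mul_comm (d t), mul_smul, SetLike.mem_coe] using Subalgebra.smul_mem _ (hd t) e
  obtain ⟨N, hN⟩ := Algebra.pow_smul_mem_of_smul_subset_of_mem_adjoin _ _ _ hmul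
    (hT ▸ Algebra.mem_top : s ∈ Algebra.adjoin R (T : Set S)) (Subalgebra.algebraMap_mem _ _)
  exact ⟨N, hN N le_rfl⟩

section FractionFields

variable (K F : Type*) [IsDomain R] [Field K] [Field F] [Algebra R K] [Algebra R F]
  [Algebra S F] [Algebra K F] [IsScalarTower R S F] [IsScalarTower R K F] [IsFractionRing R K]
  [IsFractionRing S F]

theorem exists_adjoin_simple_algebraMap_eq_top [IsDomain S] [FaithfulSMul R S]
    [Algebra.IsAlgebraic R S] [FiniteDimensional K F] [Algebra.IsSeparable K F] :
    ∃ s : S, K⟮algebraMap S F s⟯ = ⊤ := by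
  obtain ⟨β, hβ⟩ := Field.exists_primitive_element K F
  obtain ⟨⟨s, _, r, hr, rfl⟩, hs⟩ :=
    IsLocalization.surj (Algebra.algebraMapSubmonoid S R⁰) β
  refine ⟨s, ?_⟩
  have hs' : algebraMap S F s = algebraMap R K r • β := by
    rw [← hs, algebraMap_smul, Algebra.smul_def, mul_comm, ← IsScalarTower.algebraMap_apply]
  rw [hs', adjoin_simple_smul_eq (by simpa using nonZeroDivisors.ne_zero hr), hβ]

variable {K F} in
theorem exists_smul_mem_adjoin_of_adjoin_simple_eq_top [Algebra.IsAlgebraic K F]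
    (htop : K⟮algebraMap S F α⟯ = ⊤) (s : S) :
    ∃ r : R, r ≠ 0 ∧ r • s ∈ Algebra.adjoin R {α} := by
  have hs : algebraMap S F s ∈ Algebra.adjoin K {algebraMap S F α} := by
    rw [← adjoin_simple_toSubalgebra_of_isAlgebraic (Algebra.IsAlgebraic.isAlgebraic _), htop]
    trivial
  obtain ⟨⟨r, hr⟩, hmem⟩ := multiple_mem_adjoin_of_mem_localization_adjoin R⁰ K _ _ hs
  rw [← Set.image_singleton, Algebra.adjoin_algebraMap] at hmem
  obtain ⟨u, hu, hur⟩ := hmem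
  have hrs : r • s = u := IsFractionRing.injective S F
    ((map_smul (IsScalarTower.toAlgHom R S F) r s).trans hur.symm)
  exact ⟨r, nonZeroDivisors.ne_zero hr, hrs ▸ hu⟩

theorem exists_isGeneratorAway_of_isSeparable [IsDomain S] [FaithfulSMul R S]
    [Algebra.FiniteType R S] [Algebra.IsAlgebraic R S] [Algebra.IsSeparable K F] :
    ∃ (α : S) (f : R[X]) (g : R), f.Monic ∧ Irreducible (f.map (algebraMap R K)) ∧
      aeval α f = 0 ∧ g ≠ 0 ∧ IsGeneratorAway g α := by
  have : FiniteDimensional K F := by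
    have : Algebra.EssFiniteType S F := Algebra.EssFiniteType.of_isLocalization F S⁰
    have : Algebra.EssFiniteType R F := Algebra.EssFiniteType.comp R S F
    have : Algebra.EssFiniteType K F := Algebra.EssFiniteType.of_comp R K F
    exact Algebra.finite_of_essFiniteType_of_isAlgebraic
  obtain ⟨s, hs⟩ := exists_adjoin_simple_algebraMap_eq_top (R := R) (S := S) K F
  obtain ⟨d, f, hd, hf, hirr, hroot⟩ := exists_monic_irreducible_map_aeval_smul_eq_zero (R := R)
    (Algebra.IsIntegral.isIntegral (R := K) (algebraMap S F s))
  have hα : algebraMap S F (d • s) = d • algebraMap S F s :=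
    map_smul (IsScalarTower.toAlgHom R S F) d s
  have htop : K⟮algebraMap S F (d • s)⟯ = ⊤ := by
    rw [hα, ← algebraMap_smul K d, adjoin_simple_smul_eq (by simpa using hd), hs]
  obtain ⟨g, hg0, hg⟩ := exists_isGeneratorAway_of_exists_smul_mem_adjoin (R := R) fun t =>
    exists_smul_mem_adjoin_of_adjoin_simple_eq_top htop t
  refine ⟨d • s, f, g, hf, hirr, IsFractionRing.injective S F ?_, hg0, hg⟩
  rw [← aeval_algebraMap_apply, hα, hroot, map_zero]

end FractionFields

section Fields

variable {K F : Type*} [Field K] [Field F] [Algebra R K] [Algebra R F] [Algebra S F] [Algebra K F]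
  [IsScalarTower R S F] [IsScalarTower R K F]

theorem algebraMap_aeval_eq_zero_iff_map_dvd_map (hf : f.Monic)
    (hirr : Irreducible (f.map (algebraMap R K))) (hroot : aeval α f = 0) (P : R[X]) :
    algebraMap S F (aeval α P) = 0 ↔ f.map (algebraMap R K) ∣ P.map (algebraMap R K) := by
  have hrootF : aeval (algebraMap S F α) (f.map (algebraMap R K)) = 0 := by
    rw [aeval_map_algebraMap, aeval_algebraMap_apply, hroot, map_zero]
  rw [minpoly.eq_of_irreducible_of_monic hirr hrootF (hf.map _), minpoly.dvd_iff,
    aeval_map_algebraMap, aeval_algebraMap_apply]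

theorem IsGeneratorAway.adjoin_eq_top (hα : IsGeneratorAway g α) (hg : algebraMap R K g ≠ 0)
    (hF : ∀ x : F, ∃ a b : S, algebraMap S F a / algebraMap S F b = x) :
    K⟮algebraMap S F α⟯ = ⊤ := by
  have hS (s : S) : algebraMap S F s ∈ K⟮algebraMap S F α⟯ := by
    obtain ⟨N, hN⟩ := hα s
    obtain ⟨P, hP⟩ := Algebra.adjoin_mem_exists_aeval R α hN
    have hs : algebraMap S F s =
        (algebraMap R K g ^ N)⁻¹ • aeval (algebraMap S F α) (P.map (algebraMap R K)) := by
      rw [aeval_map_algebraMap, aeval_algebraMap_apply, hP, ← map_pow,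
        ← IsScalarTower.coe_toAlgHom' R S F, map_smul,
        ← algebraMap_smul K (g ^ N), inv_smul_smul₀ (by simpa using pow_ne_zero N hg)]
    rw [hs]
    exact smul_mem _ (algebra_adjoin_le_adjoin K _ (aeval_mem_adjoin_singleton K _))
  rw [eq_top_iff]
  rintro x -
  obtain ⟨a, b, rfl⟩ := hF x
  exact div_mem (hS a) (hS b)

theorem IsGeneratorAway.rank_eq_natDegree (hα : IsGeneratorAway g α)
    (hg : algebraMap R K g ≠ 0)
    (hF : ∀ x : F, ∃ a b : S, algebraMap S F a / algebraMap S F b = x) (hf : f.Monic)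
    (hirr : Irreducible (f.map (algebraMap R K))) (hroot : aeval α f = 0) :
    Module.rank K F = f.natDegree := by
  rw [rank_eq_natDegree_of_adjoin_eq_top hirr _ (hα.adjoin_eq_top hg hF), hf.natDegree_map]
  rw [aeval_map_algebraMap, aeval_algebraMap_apply, hroot, map_zero]

end Fields

theorem exists_isPrime_comap_eq_of_pow_smul_mem (A : Subalgebra R S)
    (hA : ∀ s : S, ∃ N : ℕ, g ^ N • s ∈ A) (q : Ideal A) [q.IsPrime]
    (hg : algebraMap R A g ∉ q) : ∃ Q : Ideal S, Q.IsPrime ∧ Q.comap (algebraMap A S) = q := by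
  have hmap (s : S) (hs : s ∈ q.map (algebraMap A S)) :
      ∃ N : ℕ, ∃ a ∈ q, algebraMap A S a = g ^ N • s := by
    induction hs using Submodule.span_induction with
    | mem _ h =>
      obtain ⟨a, ha, rfl⟩ := h
      exact ⟨0, a, ha, by simp⟩
    | zero => exact ⟨0, 0, q.zero_mem, by simp⟩
    | add s t _ _ hs ht =>
      obtain ⟨N, a, ha, has⟩ := hs
      obtain ⟨M, b, hb, hbt⟩ := ht
      refine ⟨N + M, g ^ M • a + g ^ N • b,
        q.add_mem (Submodule.smul_of_tower_mem q _ ha) (Submodule.smul_of_tower_mem q _ hb), ?_⟩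
      change g ^ M • algebraMap A S a + g ^ N • algebraMap A S b = _
      rw [has, hbt, smul_smul, smul_smul, ← pow_add, ← pow_add, add_comm M, smul_add]
    | smul t s _ hs =>
      obtain ⟨N, a, ha, has⟩ := hs
      obtain ⟨M, hM⟩ := hA t
      refine ⟨M + N, ⟨_, hM⟩ * a, q.mul_mem_left _ ha, ?_⟩
      change (g ^ M • t) * algebraMap A S a = _
      rw [has, smul_mul_smul_comm, ← pow_add, smul_eq_mul]
  refine (Ideal.comap_map_eq_self_iff_of_isPrime q).1 (le_antisymm (fun a ha => ?_)
    Ideal.le_comap_map)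
  obtain ⟨N, b, hb, hba⟩ := hmap _ ha
  have hb' : b = algebraMap R A g ^ N * a := Subtype.ext (by
    rw [← map_pow, ← Algebra.smul_def]; exact hba)
  exact (‹q.IsPrime›.mem_or_mem (hb' ▸ hb)).resolve_left
    fun h => hg (‹q.IsPrime›.mem_of_pow_mem _ h)

theorem IsGeneratorAway.exists_isPrime_comap_eq [FaithfulSMul R S]
    (hα : IsGeneratorAway g α) (hint : IsIntegral R α) (p : Ideal R) [p.IsPrime] (hg : g ∉ p) :
    ∃ q : Ideal S, q.IsPrime ∧ q.comap (algebraMap R S) = p := by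
  have : Algebra.IsIntegral R (Algebra.adjoin R {α}) :=
    Algebra.IsIntegral.adjoin (by simpa using hint)
  have hbot : (⊥ : Ideal (Algebra.adjoin R {α})).comap (algebraMap R _) ≤ p := fun r hr => by
    have hr0 : algebraMap R S r = 0 := congrArg Subtype.val (Ideal.mem_bot.1 hr)
    rw [(map_eq_zero_iff _ (FaithfulSMul.algebraMap_injective R S)).1 hr0]
    exact p.zero_mem
  obtain ⟨q, -, _, hq⟩ := Ideal.exists_ideal_over_prime_of_isIntegral p _ hbot
  obtain ⟨Q, hQ, hQq⟩ := exists_isPrime_comap_eq_of_pow_smul_mem (Algebra.adjoin R {α}) hα q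
    (by rwa [← Ideal.mem_comap, hq])
  exact ⟨Q, hQ, by rw [← hq, ← hQq, Ideal.comap_comap, ← IsScalarTower.algebraMap_eq]⟩

theorem aeval_mem_iff_map_resCanon_dvd {p : Ideal R} {Q : Ideal S} [p.IsPrime] [Q.IsPrime]
    (hQ : Q.comap (algebraMap R S) = p) (hf : f.Monic)
    (hirr : Irreducible (f.map (resCanon R p))) (hroot : aeval α f = 0) (P : R[X]) :
    aeval α P ∈ Q ↔ f.map (resCanon R p) ∣ P.map (resCanon R p) := by
  let := resFieldAlgebra hQ
  have := isScalarTower_resFieldAlgebra hQ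
  rw [← resCanon_eq_zero_iff]
  exact algebraMap_aeval_eq_zero_iff_map_dvd_map (K := resField R p) (F := resField S Q)
    hf hirr hroot P

theorem pow_smul_mem_iff {p : Ideal R} {Q : Ideal S} [Q.IsPrime]
    (hQ : Q.comap (algebraMap R S) = p) (hg : g ∉ p) {N : ℕ} {s : S} : g ^ N • s ∈ Q ↔ s ∈ Q := by
  rw [Algebra.smul_def, map_pow]
  refine ⟨fun h => (‹Q.IsPrime›.mem_or_mem h).resolve_left fun h' => ?_, Q.mul_mem_left _⟩
  exact hg (hQ ▸ ‹Q.IsPrime›.mem_of_pow_mem _ h')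

theorem IsGeneratorAway.eq_of_comap_eq (hα : IsGeneratorAway g α) {p : Ideal R} [p.IsPrime]
    (hg : g ∉ p) (hf : f.Monic) (hirr : Irreducible (f.map (resCanon R p)))
    (hroot : aeval α f = 0) {Q Q' : Ideal S} [Q.IsPrime] [Q'.IsPrime]
    (hQ : Q.comap (algebraMap R S) = p) (hQ' : Q'.comap (algebraMap R S) = p) : Q = Q' := by
  ext s
  obtain ⟨N, hN⟩ := hα s
  obtain ⟨P, hP⟩ := Algebra.adjoin_mem_exists_aeval R α hN
  rw [← pow_smul_mem_iff hQ hg (N := N), ← pow_smul_mem_iff hQ' hg (N := N), ← hP,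
    aeval_mem_iff_map_resCanon_dvd hQ hf hirr hroot,
    aeval_mem_iff_map_resCanon_dvd hQ' hf hirr hroot]

theorem IsGeneratorAway.resRank_eq_natDegree (hα : IsGeneratorAway g α) {p : PrimeSpectrum R}
    (hg : g ∉ p.asIdeal) (hf : f.Monic) (hp : p ∈ irreduciblePolySet f) (hroot : aeval α f = 0)
    {q : PrimeSpectrum S} (hq : q.asIdeal.comap (algebraMap R S) = p.asIdeal) :
    resRank (algebraMap R S) p q = f.natDegree := by
  let := resFieldAlgebra hq
  have := isScalarTower_resFieldAlgebra hq
  rw [resRank, dif_pos hq]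
  exact hα.rank_eq_natDegree (K := resField R p.asIdeal) (F := resField S q.asIdeal)
    (resCanon_eq_zero_iff.not.2 hg) exists_resCanon_div_resCanon_eq hf hp hroot

theorem IsGeneratorAway.fracRank_eq_natDegree [IsDomain R] [IsDomain S] [FaithfulSMul R S]
    (hα : IsGeneratorAway g α) (hg : g ≠ 0) (hf : f.Monic)
    (hirr : Irreducible (f.map (algebraMap R (FractionRing R)))) (hroot : aeval α f = 0) :
    fracRank (algebraMap R S) = f.natDegree := by
  let := FractionRing.liftAlgebra R (FractionRing S)
  rw [fracRank_algebraMap]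
  refine hα.rank_eq_natDegree (by simpa using hg) (fun x => ?_) hf hirr hroot
  obtain ⟨a, b, -, rfl⟩ := IsFractionRing.div_surjective (A := S) x
  exact ⟨a, b, rfl⟩

theorem IsGeneratorAway.mem_basicHilbertSet [IsDomain R] [IsDomain S] [FaithfulSMul R S]
    (hα : IsGeneratorAway g α) (hf : f.Monic)
    (hirr : Irreducible (f.map (algebraMap R (FractionRing R)))) (hroot : aeval α f = 0)
    {p : PrimeSpectrum R} (hg : g ∉ p.asIdeal) (hp : p ∈ irreduciblePolySet f) :
    p ∈ basicHilbertSet (algebraMap R S) := by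
  obtain ⟨Q, hQ, hQp⟩ := hα.exists_isPrime_comap_eq ⟨f, hf, hroot⟩ p.asIdeal hg
  refine ⟨⟨⟨Q, hQ⟩, hQp, fun q hq => PrimeSpectrum.ext ?_⟩, fun q hq => ?_⟩
  · exact hα.eq_of_comap_eq hg hf hp hroot hq hQp
  · have hg0 : g ≠ 0 := by
      rintro rfl
      exact hg p.asIdeal.zero_mem
    rw [hα.resRank_eq_natDegree hg hf hp hroot hq,
      hα.fracRank_eq_natDegree hg0 hf hirr hroot]

end GeneratorAway

section HilbertSet

open Polynomial

theorem AlgExt.exists_inter_subset_basicHilbertSet {R : Type*} [CommRing R] [IsDomain R]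
    [PerfectField (FractionRing R)] (E : AlgExt R) :
    ∃ (f : R[X]) (g : R), f.Monic ∧ Irreducible (f.map (algebraMap R (FractionRing R))) ∧
      g ≠ 0 ∧ irreduciblePolySet f ∩ {p | g ∉ p.asIdeal} ⊆ basicHilbertSet E.hom := by
  let := E.hom.toAlgebra
  have : FaithfulSMul R E.carrier := (faithfulSMul_iff_algebraMap_injective _ _).2 E.inj
  have : Algebra.FiniteType R E.carrier := E.ft
  have : Algebra.IsAlgebraic R E.carrier := ⟨E.alg⟩
  let := FractionRing.liftAlgebra R (FractionRing E.carrier)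
  have : Algebra.IsAlgebraic R (FractionRing E.carrier) :=
    (IsFractionRing.isAlgebraic_iff' R E.carrier (FractionRing E.carrier)).1 inferInstance
  have : Algebra.IsAlgebraic (FractionRing R) (FractionRing E.carrier) :=
    (IsFractionRing.comap_isAlgebraic_iff (A := R)).1 this
  obtain ⟨α, f, g, hf, hirr, hroot, hg0, hα⟩ :=
    exists_isGeneratorAway_of_isSeparable (R := R) (S := E.carrier) (FractionRing R)
      (FractionRing E.carrier)
  exact ⟨f, g, hf, hirr, hg0, fun p hp => hα.mem_basicHilbertSet hf hirr hroot hp.2 hp.1⟩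

theorem IsHilbertSet.exists_iInter_inter_subset {R : Type*} [CommRing R] [IsDomain R]
    [PerfectField (FractionRing R)] {H : Set (PrimeSpectrum R)} (hH : IsHilbertSet H) :
    ∃ (r : ℕ) (f : Fin r → R[X]) (g : R), (∀ i, (f i).Monic) ∧
      (∀ i, Irreducible ((f i).map (algebraMap R (FractionRing R)))) ∧ g ≠ 0 ∧
      (⋂ i, irreduciblePolySet (f i)) ∩ {p | g ∉ p.asIdeal} ⊆ H := by
  obtain ⟨r, E, b, hb, rfl⟩ := hH
  choose f g hf hirr hg hE using fun i => (E i).exists_inter_subset_basicHilbertSet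
  refine ⟨r, f, b * ∏ i, g i, hf, hirr,
    mul_ne_zero hb (Finset.prod_ne_zero_iff.2 fun i _ => hg i), ?_⟩
  rintro p ⟨hp, hbg⟩
  have hdvd {a : R} (ha : a ∣ b * ∏ i, g i) : a ∉ p.asIdeal :=
    fun h => hbg (Ideal.mem_of_dvd _ ha h)
  refine ⟨Set.mem_iInter.2 fun i => hE i ⟨Set.mem_iInter.1 hp i, ?_⟩, hdvd (dvd_mul_right _ _)⟩
  exact hdvd ((Finset.dvd_prod_of_mem g (Finset.mem_univ i)).mul_left b)

theorem ker_mem_irreduciblePolySet {R L : Type*} [CommRing R] [Field L] (c : R →+* L) {f : R[X]}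
    (hf : f.Monic) (hc : Irreducible (f.map c)) :
    (⟨RingHom.ker c, RingHom.ker_isPrime c⟩ : PrimeSpectrum R) ∈ irreduciblePolySet f := by
  have : (RingHom.ker c).IsPrime := RingHom.ker_isPrime c
  let χ : resField R (RingHom.ker c) →+* L := IsFractionRing.lift (RingHom.kerLift_injective c)
  have hχ : χ.comp (resCanon R (RingHom.ker c)) = c :=
    RingHom.ext fun r => IsFractionRing.lift_algebraMap
      (RingHom.kerLift_injective c) (Ideal.Quotient.mk _ r)
  exact (hf.map _).irreducible_of_irreducible_map χ _ (by rwa [Polynomial.map_map, hχ])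

theorem ker_ringHom_codRestrict {R S σ : Type*} [CommRing R] [CommRing S] [SetLike σ S]
    [SubringClass σ S] (c : R →+* S) (A : σ) (h : ∀ r, c r ∈ A) :
    RingHom.ker (c.codRestrict A h) = RingHom.ker c :=
  SetLike.ext fun _ => Subtype.ext_iff

end HilbertSet

theorem geometric_hilbertSet_contains_specialization_set_general
    {R : Type*} [CommRing R] [IsDomain R] [PerfectField (FractionRing R)]
    {H : Set (PrimeSpectrum R)} (hH : IsHilbertSet H) :
    ∃ (r : ℕ) (f : Fin r → Polynomial R) (g : R),
      (∀ i, (f i).Monic) ∧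
      (∀ i, Irreducible ((f i).map (algebraMap R (FractionRing R)))) ∧
      g ≠ 0 ∧
      ∀ (L : Type v) [Field L] (c : R →+* L), c g ≠ 0 → (∀ i, Irreducible ((f i).map c)) →
        (⟨RingHom.ker c, RingHom.ker_isPrime c⟩ : PrimeSpectrum R) ∈ H := by
  obtain ⟨r, f, g, hf, hirr, hg, hfg⟩ := hH.exists_iInter_inter_subset
  refine ⟨r, f, g, hf, hirr, hg, fun L _ c hcg hc => hfg ⟨Set.mem_iInter.2 fun i => ?_, hcg⟩⟩
  exact ker_mem_irreduciblePolySet c (hf i) (hc i)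

open IntermediateField in
/-- **Geometric Hilbert sets contain sets defined by specialized irreducibility.**
Let `k` be an algebraically closed field of characteristic zero, `k₀ ⊆ k` a subfield finitely
generated over `ℚ`, `B` a finitely generated `k`-algebra that is an integral domain, and
`B₀ ⊆ B` a finitely generated `k₀`-subalgebra such that the canonical map `B₀ ⊗_{k₀} k → B` is
an isomorphism.  Let `H` be a Hilbert subset of `Spec(B₀)` and let `𝓗 ⊆ Hom_{k-alg}(B,k)` be
the set of all `c` whose restriction to `B₀` has kernel belonging to `H`.  Then there exist
finitely many monic polynomials `f 0, …, f (r-1) ∈ B₀[y]`, each irreducible in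
`Frac(B₀)[y]`, and a nonzero `g ∈ B₀`, such that every `c ∈ Hom_{k-alg}(B,k)` with
`c g ≠ 0` and with each specialized polynomial `(f i)^c` irreducible in `k₀(c(B₀))[y]`
belongs to `𝓗`; here `(f i)^c` is obtained by applying `c` to the coefficients of `f i`, and
`k₀(c(B₀))` is the subfield of `k` generated by `k₀` and the image `c(B₀)`. -/
theorem geometric_hilbertSet_contains_specialization_set
    (k₀ : Type u) [Field k₀] [CharZero k₀]
    (hk₀fg : ∃ s : Finset k₀, IntermediateField.adjoin ℚ (s : Set k₀) = ⊤)
    (k : Type u) [Field k] [IsAlgClosed k] [CharZero k] [Algebra k₀ k]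
    (B : Type u) [CommRing B] [IsDomain B] [Algebra k B] [Algebra.FiniteType k B]
    (B₀ : Type u) [CommRing B₀] [IsDomain B₀] [Algebra k₀ B₀] [Algebra.FiniteType k₀ B₀]
    [Algebra B₀ B] [Algebra k₀ B] [IsScalarTower k₀ B₀ B] [IsScalarTower k₀ k B]
    (hB₀B : Function.Injective (algebraMap B₀ B))
    (hiso : Function.Bijective
      (Algebra.TensorProduct.productMap
        (IsScalarTower.toAlgHom k₀ B₀ B) (IsScalarTower.toAlgHom k₀ k B)))
    (H : Set (PrimeSpectrum B₀)) (hH : IsHilbertSet H) :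
    ∃ (r : ℕ) (f : Fin r → Polynomial B₀) (g : B₀),
      (∀ i, (f i).Monic) ∧
      (∀ i, Irreducible ((f i).map (algebraMap B₀ (FractionRing B₀)))) ∧
      g ≠ 0 ∧
      ∀ c : B →ₐ[k] k, c (algebraMap B₀ B g) ≠ 0 →
        (∀ i, Irreducible ((f i).map
          (((c : B →+* k).comp (algebraMap B₀ B)).codRestrict
            (IntermediateField.adjoin k₀
              (Set.range ((c : B →+* k).comp (algebraMap B₀ B))))
            (fun x => IntermediateField.subset_adjoin k₀ _ ⟨x, rfl⟩)))) →
        (⟨RingHom.ker ((c : B →+* k).comp (algebraMap B₀ B)),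
            RingHom.ker_isPrime _⟩ : PrimeSpectrum B₀) ∈ H := by
  have : CharZero B₀ := charZero_of_injective_algebraMap (FaithfulSMul.algebraMap_injective k₀ B₀)
  obtain ⟨r, f, g, hf, hirr, hg, hfg⟩ :=
    geometric_hilbertSet_contains_specialization_set_general hH
  exact ⟨r, f, g, hf, hirr, hg, fun c hcg hc => by
    simpa only [ker_ringHom_codRestrict] using hfg _ _ (fun h => hcg (congrArg Subtype.val h)) hc⟩
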